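/- arXiv:2602.04424 — 2 statements merged into one kernel-verified Lean document; each statement's English description precedes it below -/
import Mathlib

section
/- Suppose dom(T²) ⊆ B ⊆ dom(T). Then for every (x,y) ∈ ρ_B(T) and every w ∈ dom(T) one has T(R_{x,y}w) = R_{x,y}(Tw). -/
/-- `dom (T²)`: the elements of the domain `D` of `T` whose image lies again in `D`. -/
def dom2 {V : Type*} (T : V → V) (D : Set V) : Set V := {u | u ∈ D ∧ T u ∈ D}

/-- `dom (T³)`. -/
def dom3 {V : Type*} (T : V → V) (D : Set V) : Set V := {u | u ∈ dom2 T D ∧ T u ∈ dom2 T D}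

/-- `dom_B (T²) = dom(T²) ∩ B`. -/
def domB2 {V : Type*} (T : V → V) (D Bc : Set V) : Set V := dom2 T D ∩ Bc

/-- The operator `Q_{x,y} u = T²u − 2x Tu + (x² + y²) u`. -/
noncomputable def Qop {V : Type*} [AddCommGroup V] [Module ℝ V]
    (T : V → V) (x y : ℝ) (u : V) : V :=
  T (T u) - (2 * x) • T u + (x ^ 2 + y ^ 2) • u

/-- `R` is a bounded (everywhere-defined) operator which is a two-sided inverse
of `Q_{x,y} : dom_B(T²) → V`; in particular `Q_{x,y}` is bijective from `dom_B(T²)` onto `V`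
with bounded inverse `R`. -/
def IsInv {V : Type*} [NormedAddCommGroup V] [NormedSpace ℝ V]
    (T : V → V) (D Bc : Set V) (x y : ℝ) (R : V →L[ℝ] V) : Prop :=
  (∀ v : V, R v ∈ domB2 T D Bc) ∧ (∀ v : V, Qop T x y (R v) = v) ∧
    (∀ u ∈ domB2 T D Bc, R (Qop T x y u) = u)

/-- The resolvent set `ρ_B(T) ⊆ ℝ²`. -/
def rhoB {V : Type*} [NormedAddCommGroup V] [NormedSpace ℝ V]
    (T : V → V) (D Bc : Set V) : Set (ℝ × ℝ) :=
  {p | ∃ R : V →L[ℝ] V, IsInv T D Bc p.1 p.2 R}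

/-!
If `u = R_{x,y} w` with `w ∈ dom(T)`, then `T²u = w + 2x Tu − (x² + y²) u` lies in `dom(T)`, so
`u ∈ dom(T³)` and `Q_{x,y} (Tu) = T (Q_{x,y} u) = Tw`. Since `Tu ∈ dom(T²) ⊆ B`, the operator
`R_{x,y}` may be applied to the left of this identity, giving `Tu = R_{x,y} (Tw)`.
-/

section

variable {V : Type*} [AddCommGroup V] [Module ℝ V] {T : V → V} {D : Submodule ℝ V}

theorem mem_dom3_iff_Qop_mem (x y : ℝ) {u : V} (hu : u ∈ dom2 T D) :
    u ∈ dom3 T D ↔ Qop T x y u ∈ D := by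
  have hxTu : (2 * x) • T u ∈ D := D.smul_mem _ hu.2
  have hyu : (x ^ 2 + y ^ 2) • u ∈ D := D.smul_mem _ hu.1
  calc u ∈ dom3 T D ↔ T (T u) ∈ D := ⟨fun h => h.2.2, fun h => ⟨hu, hu.2, h⟩⟩
    _ ↔ Qop T x y u ∈ D := by rw [Qop, D.add_mem_iff_left hyu, D.sub_mem_iff_left hxTu]

theorem map_Qop (hTadd : ∀ u ∈ D, ∀ v ∈ D, T (u + v) = T u + T v)
    (hTsmul : ∀ (c : ℝ), ∀ u ∈ D, T (c • u) = c • T u) (x y : ℝ) {u : V} (hu : u ∈ dom3 T D) :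
    T (Qop T x y u) = Qop T x y (T u) := by
  obtain ⟨⟨hu, hTu⟩, -, hTTu⟩ := hu
  have hxTu : (-(2 * x)) • T u ∈ D := D.smul_mem _ hTu
  have hyu : (x ^ 2 + y ^ 2) • u ∈ D := D.smul_mem _ hu
  simp only [Qop, sub_eq_add_neg, ← neg_smul]
  rw [hTadd _ (D.add_mem hTTu hxTu) _ hyu, hTadd _ hTTu _ hxTu, hTsmul _ _ hTu, hTsmul _ _ hu]

theorem stmt16_general {B : Set V} (hD2B : dom2 T D ⊆ B)
    (hTadd : ∀ u ∈ D, ∀ v ∈ D, T (u + v) = T u + T v)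
    (hTsmul : ∀ (c : ℝ), ∀ u ∈ D, T (c • u) = c • T u) {x y : ℝ} {R : V → V}
    (hR : Set.MapsTo R D (domB2 T D B)) (hRQ : Set.InvOn R (Qop T x y) (domB2 T D B) D)
    {w : V} (hw : w ∈ D) : T (R w) = R (T w) := by
  have hQRw : Qop T x y (R w) = w := hRQ.2 hw
  have hRw : R w ∈ dom3 T D := (mem_dom3_iff_Qop_mem x y (hR hw).1).2 (by rwa [hQRw])
  calc T (R w) = R (Qop T x y (T (R w))) := (hRQ.1 ⟨hRw.2, hD2B hRw.2⟩).symm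
    _ = R (T (Qop T x y (R w))) := by rw [map_Qop hTadd hTsmul x y hRw]
    _ = R (T w) := by rw [hQRw]

end

/-- if `dom(T²) ⊆ B ⊆ dom(T)`, then `T` and `R_{x,y}` commute on `dom(T)`,
for every `(x,y) ∈ ρ_B(T)` (with `R = R_{x,y}` the corresponding inverse). -/
theorem stmt16 {V : Type*} [NormedAddCommGroup V] [NormedSpace ℝ V] [CompleteSpace V]
    (T : V → V) (D Bc : Submodule ℝ V) (hBD : (Bc : Set V) ⊆ (D : Set V))
    (hD2B : dom2 T (D : Set V) ⊆ (Bc : Set V))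
    (hTadd : ∀ u ∈ D, ∀ v ∈ D, T (u + v) = T u + T v)
    (hTsmul : ∀ (c : ℝ), ∀ u ∈ D, T (c • u) = c • T u)
    (hTclosed : IsClosed {p : V × V | p.1 ∈ D ∧ p.2 = T p.1}) :
    ∀ (x y : ℝ) (R : V →L[ℝ] V), IsInv T (D : Set V) (Bc : Set V) x y R →
      ∀ w ∈ D, T (R w) = R (T w) := by
  intro x y R ⟨hmem, hright, hleft⟩ w hw
  exact stmt16_general hD2B hTadd hTsmul (fun v _ => hmem v) ⟨hleft, fun v _ => hright v⟩ hw
end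

section
/- (Right S-resolvent equation.) For every s ∈ ρ_{S,B}(T) and every v ∈ dom(T) one has s·(S_{R,B}^{-1}(s,T)v) − S_{R,B}^{-1}(s,T)(Tv) = v + s̄·([T,Q_{s,B}[T]^{-1}]v) − T([T,Q_{s,B}[T]^{-1}]v), where [T,Q_{s,B}[T]^{-1}]v := T(Q_{s,B}[T]^{-1}v) − Q_{s,B}[T]^{-1}(Tv), a vector belonging to dom(T). -/
/-- A two-sided Banach module structure over the quaternions `ℍ = Quaternion ℝ` on a real
Banach space `V`: commuting left (`lm`) and right (`rm`) `ℍ`-module structures, compatible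
with the real vector space structure, with a norm bound `‖a·v‖, ‖v·a‖ ≤ C|a|‖v‖`. -/
structure QuatBimodule (V : Type*) [NormedAddCommGroup V] [NormedSpace ℝ V] where
  /-- left multiplication `v ↦ a·v` (real-linear in `v`) -/
  lm : Quaternion ℝ → V →ₗ[ℝ] V
  /-- right multiplication `v ↦ v·a` (real-linear in `v`) -/
  rm : Quaternion ℝ → V →ₗ[ℝ] V
  lm_add : ∀ (a b : Quaternion ℝ) (v : V), lm (a + b) v = lm a v + lm b v
  rm_add : ∀ (a b : Quaternion ℝ) (v : V), rm (a + b) v = rm a v + rm b v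
  lm_mul : ∀ (a b : Quaternion ℝ) (v : V), lm (a * b) v = lm a (lm b v)
  rm_mul : ∀ (a b : Quaternion ℝ) (v : V), rm (a * b) v = rm b (rm a v)
  lm_rm_comm : ∀ (a b : Quaternion ℝ) (v : V), lm a (rm b v) = rm b (lm a v)
  lm_real : ∀ (r : ℝ) (v : V), lm (r : Quaternion ℝ) v = r • v
  rm_real : ∀ (r : ℝ) (v : V), rm (r : Quaternion ℝ) v = r • v
  bound : ∃ C : ℝ, ∀ (a : Quaternion ℝ) (v : V),
    ‖lm a v‖ ≤ C * ‖a‖ * ‖v‖ ∧ ‖rm a v‖ ≤ C * ‖a‖ * ‖v‖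

/-- The operator `Q_{s,B}[T] u = T²u − 2(Re s) Tu + |s|² u`. -/
noncomputable def Qq {V : Type*} [NormedAddCommGroup V] [NormedSpace ℝ V]
    (T : V → V) (s : Quaternion ℝ) (u : V) : V :=
  T (T u) - (2 * s.re) • T u + (‖s‖ ^ 2) • u

/-- `R` is a bounded two-sided inverse of `Q_{s,B}[T] : dom_B(T²) → V`. -/
def IsInvQ {V : Type*} [NormedAddCommGroup V] [NormedSpace ℝ V]
    (T : V → V) (D Bc : Set V) (s : Quaternion ℝ) (R : V →L[ℝ] V) : Prop :=
  (∀ v : V, R v ∈ domB2 T D Bc) ∧ (∀ v : V, Qq T s (R v) = v) ∧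
    (∀ u ∈ domB2 T D Bc, R (Qq T s u) = u)

/-- The `S`-resolvent set with boundary conditions `ρ_{S,B}(T) ⊆ ℍ`. -/
def rhoSB {V : Type*} [NormedAddCommGroup V] [NormedSpace ℝ V]
    (T : V → V) (D Bc : Set V) : Set (Quaternion ℝ) :=
  {s | ∃ R : V →L[ℝ] V, IsInvQ T D Bc s R}

/-!
Write `S u = s̄·u - T u`. Since `s·s̄ = |s|²` and `s + s̄ = 2 Re s`, every `u` satisfies
`s·S u = Q u + S (T u)`. For `u = Q⁻¹ v` the left-hand side of the resolvent equation becomes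
`v + S (T (Q⁻¹ v)) - S (Q⁻¹ (T v))`, and additivity of `S` on `dom(T)` merges the last two terms
into `S ([T, Q⁻¹] v)`.
-/

section

open scoped Quaternion

section QuaternionAction

variable {A V : Type*} [CommRing A] [AddCommGroup V] [Module A V] [Module ℍ[A] V]
  [IsScalarTower A ℍ[A] V]

theorem quaternion_smul_star_smul (s : ℍ[A]) (u : V) :
    s • star s • u = Quaternion.normSq s • u := by
  rw [smul_smul, Quaternion.self_mul_star, ← Quaternion.algebraMap_def, algebraMap_smul]

theorem quaternion_smul_add_star_smul (s : ℍ[A]) (u : V) :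
    s • u + star s • u = (2 * s.re) • u := by
  rw [← add_smul, Quaternion.self_add_star', ← Quaternion.algebraMap_def, algebraMap_smul]

end QuaternionAction

theorem map_sub_of_map_add_on {G H : Type*} [AddGroup G] [AddGroup H] {f : G → H}
    {D : AddSubgroup G} (hf : ∀ u ∈ D, ∀ w ∈ D, f (u + w) = f u + f w) {u w : G}
    (hu : u ∈ D) (hw : w ∈ D) : f (u - w) = f u - f w := by
  rw [eq_sub_iff_add_eq, ← hf _ (D.sub_mem hu hw) _ hw, sub_add_cancel]

/-- The operator `u ↦ s̄·u - T u`, whose composition with `Q_{s,B}[T]⁻¹` is the right `S`-resolvent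
operator. Like `T` it is total, with meaningless values outside `dom(T)`. -/
def starSub {A V : Type*} [Star A] [SMul A V] [Sub V] (T : V → V) (s : A) (u : V) : V :=
  star s • u - T u

theorem starSub_sub {A V : Type*} [Star A] [AddCommGroup V] [DistribSMul A V] {T : V → V}
    {D : AddSubgroup V} (hT : ∀ u ∈ D, ∀ w ∈ D, T (u + w) = T u + T w) (s : A) {u w : V}
    (hu : u ∈ D) (hw : w ∈ D) :
    starSub T s (u - w) = starSub T s u - starSub T s w := by
  simp only [starSub, smul_sub, map_sub_of_map_add_on hT hu hw, sub_sub_sub_comm]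

section ResolventEquation

variable {V : Type*} [NormedAddCommGroup V] [NormedSpace ℝ V] [Module ℍ[ℝ] V]
  [IsScalarTower ℝ ℍ[ℝ] V] (T : V → V) (s : ℍ[ℝ])

theorem smul_starSub (u : V) : s • starSub T s u = Qq T s u + starSub T s (T u) := by
  have norm_term : s • star s • u = (‖s‖ ^ 2) • u := by
    rw [quaternion_smul_star_smul, Quaternion.normSq_eq_norm_mul_self, sq]
  have trace_term : s • T u + star s • T u = (2 * s.re) • T u :=
    quaternion_smul_add_star_smul s (T u)
  rw [starSub, starSub, Qq, smul_sub, norm_term, ← trace_term]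
  abel

/-- The resolvent equation is the case `w = T v` with `v ∈ dom(T)`; a free `w` avoids the
meaningless values of `T` outside `dom(T)`. -/
theorem stmt18_general {D : AddSubgroup V} (hT : ∀ u ∈ D, ∀ w ∈ D, T (u + w) = T u + T w)
    {R : V → V} (hdom : ∀ v, R v ∈ dom2 T D) (hR : Function.RightInverse R (Qq T s)) (v w : V) :
    s • starSub T s (R v) - starSub T s (R w) = v + starSub T s (T (R v) - R w) := by
  rw [smul_starSub, hR v, starSub_sub hT s (hdom v).2 (hdom w).1, add_sub_assoc]

end ResolventEquation

namespace QuatBimodule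

variable {V : Type*} [NormedAddCommGroup V] [NormedSpace ℝ V] (P : QuatBimodule V)

/-- The left `ℍ`-module structure of a two-sided quaternionic Banach module, making results on
quaternionic modules available for `P.lm`. It is not an instance because it depends on `P`. -/
abbrev leftModule : Module ℍ[ℝ] V where
  smul a v := P.lm a v
  one_smul v := (P.lm_real 1 v).trans (one_smul ℝ v)
  mul_smul := P.lm_mul
  smul_zero a := map_zero (P.lm a)
  smul_add a := map_add (P.lm a)
  add_smul := P.lm_add
  zero_smul v := (P.lm_real 0 v).trans (zero_smul ℝ v)

theorem isScalarTower_leftModule :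
    letI := P.leftModule
    IsScalarTower ℝ ℍ[ℝ] V :=
  letI := P.leftModule
  ⟨fun r a v => by
    change P.lm (r • a) v = r • P.lm a v
    rw [← Quaternion.coe_mul_eq_smul, P.lm_mul, P.lm_real]⟩

end QuatBimodule

end

/-- right `S`-resolvent equation with boundary conditions: for
`s ∈ ρ_{S,B}(T)` with inverse `R = Q_{s,B}[T]⁻¹`, `S_{R,B}^{-1}(s,T)v = s̄·(Rv) − T(Rv)`,
and the commutator `[T,R]v = T(Rv) − R(Tv)`, one has, for `v ∈ dom(T)`,
`s·(S_R v) − S_R (Tv) = v + s̄·([T,R]v) − T([T,R]v)`. -/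
theorem stmt18 {V : Type*} [NormedAddCommGroup V] [NormedSpace ℝ V] [CompleteSpace V]
    (P : QuatBimodule V) (T : V → V) (D Bc : Submodule ℝ V)
    (hBD : (Bc : Set V) ⊆ (D : Set V))
    (hDrm : ∀ (a : Quaternion ℝ), ∀ v ∈ D, P.rm a v ∈ D)
    (hBrm : ∀ (a : Quaternion ℝ), ∀ v ∈ Bc, P.rm a v ∈ Bc)
    (hTadd : ∀ u ∈ D, ∀ v ∈ D, T (u + v) = T u + T v)
    (hTsmul : ∀ (c : ℝ), ∀ u ∈ D, T (c • u) = c • T u)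
    (hTrm : ∀ (a : Quaternion ℝ), ∀ u ∈ D, T (P.rm a u) = P.rm a (T u))
    (hTclosed : IsClosed {p : V × V | p.1 ∈ D ∧ p.2 = T p.1})
    (s : Quaternion ℝ) (R : V →L[ℝ] V)
    (hR : IsInvQ T (D : Set V) (Bc : Set V) s R) :
    ∀ v ∈ D,
      P.lm s (P.lm (star s) (R v) - T (R v)) - (P.lm (star s) (R (T v)) - T (R (T v)))
        = v + P.lm (star s) (T (R v) - R (T v)) - T (T (R v) - R (T v)) := by
  let := P.leftModule
  have := P.isScalarTower_leftModule
  intro v _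
  rw [add_sub_assoc]
  exact stmt18_general (D := D.toAddSubgroup) T s hTadd (fun u => (hR.1 u).1) hR.2.1 v (T v)
end
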